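/- Let n be a finite index type, let P : Matrix n n ℝ be a symmetric positive definite matrix, let h : n → ℝ, let β ∈ ℝ, and let R > 0. Define K = (β / (β² · hᵀ P h + R)) • (P h) and the posterior covariance P' = (I − β • (K hᵀ)) * P. Then the trace of the posterior Fisher information matrix satisfies Tr(P'⁻¹) = Tr(P⁻¹) + (β²/R) · ∑ᵢ hᵢ²; in particular Tr(P'⁻¹) ≥ Tr(P⁻¹), so the cumulative Fisher information is nondecreasing in the number of measurements. -/

import Mathlib

open Matrix

/-!
The posterior covariance is `(1 - β K hᵀ) P`, where `1 - β K hᵀ` is a rank-one perturbation of the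
identity. With `S = β² hᵀ P h + R` one has `1 - β hᵀ K = R / S`, so the Sherman-Morrison formula
inverts this factor, and the factors `S` cancel: `P'⁻¹ = P⁻¹ + (β² / R) h hᵀ`. A measurement thus
adds a rank-one term to the information matrix, whose trace is `(β² / R) hᵀ h ≥ 0`.
-/

section RankOne

variable {n 𝕜 : Type*} [Fintype n] [DecidableEq n] [Field 𝕜]

theorem inv_one_sub_vecMulVec {u v : n → 𝕜} (huv : 1 - v ⬝ᵥ u ≠ 0) :
    (1 - vecMulVec u v)⁻¹ = 1 + (1 - v ⬝ᵥ u)⁻¹ • vecMulVec u v := by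
  have hsq : vecMulVec u v * vecMulVec u v = (v ⬝ᵥ u) • vecMulVec u v := by
    rw [vecMulVec_mul_vecMulVec, vecMulVec_smul]
  have hcoeff : (1 - v ⬝ᵥ u)⁻¹ - 1 - (1 - v ⬝ᵥ u)⁻¹ * (v ⬝ᵥ u) = 0 := by
    field_simp
    ring
  apply inv_eq_right_inv
  calc (1 - vecMulVec u v) * (1 + (1 - v ⬝ᵥ u)⁻¹ • vecMulVec u v)
      = 1 + ((1 - v ⬝ᵥ u)⁻¹ - 1 - (1 - v ⬝ᵥ u)⁻¹ * (v ⬝ᵥ u)) • vecMulVec u v := by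
        rw [sub_mul, one_mul, mul_add, mul_one, mul_smul_comm, hsq]
        module
    _ = 1 := by rw [hcoeff, zero_smul, add_zero]

end RankOne

section Kalman

variable {n 𝕜 : Type*} [Fintype n] [Field 𝕜]

/-- The variance `S = β² hᵀ P h + R` of the predicted detection signal, for prior covariance `P`,
measurement vector `h`, signal gain `β` and noise variance `R`. -/
def innovationVariance (P : Matrix n n 𝕜) (h : n → 𝕜) (β R : 𝕜) : 𝕜 :=
  β ^ 2 * (h ⬝ᵥ P *ᵥ h) + R

/-- The Kalman gain `K = (β / S) P h` of a scalar measurement; it is `0` when `S = 0`. -/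
def kalmanGain (P : Matrix n n 𝕜) (h : n → 𝕜) (β R : 𝕜) : n → 𝕜 :=
  (β / innovationVariance P h β R) • P *ᵥ h

/-- The covariance `P' = (1 - β K hᵀ) P` after a scalar measurement. -/
def posteriorCovariance [DecidableEq n] (P : Matrix n n 𝕜) (h : n → 𝕜) (β R : 𝕜) :
    Matrix n n 𝕜 :=
  (1 - β • vecMulVec (kalmanGain P h β R) h) * P

variable {P : Matrix n n 𝕜} {h : n → 𝕜} {β R : 𝕜}

theorem innovationVariance_pos [LinearOrder 𝕜] [IsStrictOrderedRing 𝕜] [StarRing 𝕜]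
    [TrivialStar 𝕜] (hP : P.PosSemidef) (hR : 0 < R) : 0 < innovationVariance P h β R := by
  have hquad : 0 ≤ h ⬝ᵥ P *ᵥ h := by simpa using hP.dotProduct_mulVec_nonneg h
  unfold innovationVariance
  positivity

theorem one_sub_dotProduct_smul_kalmanGain (hS : innovationVariance P h β R ≠ 0) :
    1 - h ⬝ᵥ (β • kalmanGain P h β R) = R / innovationVariance P h β R := by
  rw [kalmanGain, dotProduct_smul, dotProduct_smul, smul_eq_mul, smul_eq_mul]
  field_simp
  rw [innovationVariance]
  ring

variable [DecidableEq n]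

theorem inv_one_sub_smul_vecMulVec_kalmanGain (hS : innovationVariance P h β R ≠ 0) (hR : R ≠ 0) :
    (1 - β • vecMulVec (kalmanGain P h β R) h)⁻¹ = 1 + (β ^ 2 / R) • vecMulVec (P *ᵥ h) h := by
  have hratio := one_sub_dotProduct_smul_kalmanGain hS
  have hcoeff : (R / innovationVariance P h β R)⁻¹ * β * (β / innovationVariance P h β R) =
      β ^ 2 / R := by
    field_simp
  rw [← smul_vecMulVec, inv_one_sub_vecMulVec (hratio ▸ div_ne_zero hR hS), hratio, kalmanGain,
    smul_vecMulVec, smul_vecMulVec, smul_smul, smul_smul, hcoeff]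

theorem inv_posteriorCovariance (hP : IsUnit P) (hS : innovationVariance P h β R ≠ 0)
    (hR : R ≠ 0) :
    (posteriorCovariance P h β R)⁻¹ = P⁻¹ + (β ^ 2 / R) • vecMulVec h h := by
  have hPinv : P⁻¹ *ᵥ P *ᵥ h = h := by
    rw [mulVec_mulVec, nonsing_inv_mul P (P.isUnit_iff_isUnit_det.mp hP), one_mulVec]
  rw [posteriorCovariance, Matrix.mul_inv_rev, inv_one_sub_smul_vecMulVec_kalmanGain hS hR, mul_add,
    mul_one, mul_smul_comm, mul_vecMulVec, hPinv]

theorem trace_inv_posteriorCovariance (hP : IsUnit P) (hS : innovationVariance P h β R ≠ 0)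
    (hR : R ≠ 0) :
    (posteriorCovariance P h β R)⁻¹.trace = P⁻¹.trace + β ^ 2 / R * ∑ i, h i ^ 2 := by
  rw [inv_posteriorCovariance hP hS hR, trace_add, trace_smul, trace_vecMulVec, smul_eq_mul]
  simp only [dotProduct, sq]

theorem stmt_13_general [LinearOrder 𝕜] [IsStrictOrderedRing 𝕜] (hP : IsUnit P)
    (hS : innovationVariance P h β R ≠ 0) (hR : 0 < R) :
    (posteriorCovariance P h β R)⁻¹.trace = P⁻¹.trace + β ^ 2 / R * ∑ i, h i ^ 2 ∧
      P⁻¹.trace ≤ (posteriorCovariance P h β R)⁻¹.trace := by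
  have htrace := trace_inv_posteriorCovariance hP hS hR.ne'
  refine ⟨htrace, ?_⟩
  rw [htrace]
  exact le_add_of_nonneg_right (by positivity)

end Kalman

/-- The cumulative Fisher information is nondecreasing:
`Tr P'⁻¹ = Tr P⁻¹ + (β²/R) ∑ᵢ hᵢ²  ≥ Tr P⁻¹`. -/
theorem stmt_13 {n : Type*} [Fintype n] [DecidableEq n]
    (P : Matrix n n ℝ) (hP : P.PosDef) (h : n → ℝ) (β : ℝ) (R : ℝ)
    (hR : 0 < R) :
    ((((1 : Matrix n n ℝ) -
          β • vecMulVec ((β / (β ^ 2 * (h ⬝ᵥ P.mulVec h) + R)) • P.mulVec h) h)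
        * P)⁻¹).trace = (P⁻¹).trace + (β ^ 2 / R) * ∑ i, (h i) ^ 2 ∧
    (P⁻¹).trace ≤
      ((((1 : Matrix n n ℝ) -
            β • vecMulVec ((β / (β ^ 2 * (h ⬝ᵥ P.mulVec h) + R)) • P.mulVec h) h)
          * P)⁻¹).trace :=
  stmt_13_general hP.isUnit (innovationVariance_pos hP.posSemidef hR).ne' hR
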